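/- arXiv:2001.08825 — 2 statements merged into one kernel-verified Lean document; each statement's English description precedes it below -/
import Mathlib

section
/- Let α ∈ (0,2), n ∈ ℕ with n ≥ 1, and x ∈ ℝ. Then the following two finite-sum expressions are equal: −(2·Γ(1+α)/(ix+1)^(1+α)) · ∑_{k=0}^{n−1} C(n,k+1)·C(−1−α,k)·(2/(ix+1))^k = −(2n·Γ(1+α)/(ix+1)^(n+α)) · ∑_{l=0}^{n−1} C(n−1,l)·(ix)^(n−1−l)·G_α(l). (That is, the closed-form fractional Laplacian of λ_n can be expanded as a polynomial in ix times (ix+1)^(−n−α).) -/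
open MeasureTheory Finset

/-- The constant `c_α = α·2^(α−1)·Γ(1/2+α/2)/(√π·Γ(1−α/2))`. -/
noncomputable def cFrac (α : ℝ) : ℝ :=
  α * 2 ^ (α - 1) * Real.Gamma (1 / 2 + α / 2) / (Real.sqrt Real.pi * Real.Gamma (1 - α / 2))

/-- The complex Higgins function `λ_n(x) = ((ix−1)/(ix+1))^n`. -/
noncomputable def higgins (n : ℤ) (x : ℝ) : ℂ :=
  ((Complex.I * (x : ℂ) - 1) / (Complex.I * (x : ℂ) + 1)) ^ n

/-- The derivative `λ_n'`. -/
noncomputable def higgins' (n : ℤ) (x : ℝ) : ℂ := deriv (higgins n) x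

/-- The complex Christov function `μ_n(x) = (ix−1)^n/(ix+1)^(n+1)`. -/
noncomputable def christov (n : ℤ) (x : ℝ) : ℂ :=
  (Complex.I * (x : ℂ) - 1) ^ n / (Complex.I * (x : ℂ) + 1) ^ (n + 1)

/-- The derivative `μ_n'`. -/
noncomputable def christov' (n : ℤ) (x : ℝ) : ℂ := deriv (christov n) x

/-- Generalized binomial coefficient `C(z,k) = z(z−1)⋯(z−k+1)/k!` over `ℂ`. -/
noncomputable def gbinom (z : ℂ) (k : ℕ) : ℂ :=
  (∏ i ∈ Finset.range k, (z - (i : ℂ))) / (k.factorial : ℂ)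

/-- Generalized binomial coefficient `C(z,k) = z(z−1)⋯(z−k+1)/k!` over `ℝ`. -/
noncomputable def gbinomR (z : ℝ) (k : ℕ) : ℝ :=
  (∏ i ∈ Finset.range k, (z - (i : ℝ))) / (k.factorial : ℝ)

/-- Rising factorial (Pochhammer symbol) `(z)_k = z(z+1)⋯(z+k−1)` over `ℂ`. -/
noncomputable def poch (z : ℂ) (k : ℕ) : ℂ := ∏ i ∈ Finset.range k, (z + (i : ℂ))

/-- `G_α(l) = (1/(l+1))·∑_{k=0}^{l} C(l+1,k+1)·C(−1−α,k)·2^k = ₂F₁(−l, 1+α; 2; 2)`, over `ℂ`. -/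
noncomputable def Gc (α : ℝ) (l : ℕ) : ℂ :=
  (1 / ((l : ℂ) + 1)) * ∑ k ∈ Finset.range (l + 1),
    gbinom ((l : ℂ) + 1) (k + 1) * gbinom (-1 - (α : ℂ)) k * 2 ^ k

/-- `G_α(l) = (1/(l+1))·∑_{k=0}^{l} C(l+1,k+1)·C(−1−α,k)·2^k = ₂F₁(−l, 1+α; 2; 2)`, over `ℝ`. -/
noncomputable def GR (α : ℝ) (l : ℕ) : ℝ :=
  (1 / ((l : ℝ) + 1)) * ∑ k ∈ Finset.range (l + 1),
    gbinomR ((l : ℝ) + 1) (k + 1) * gbinomR (-1 - α) k * 2 ^ k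

/-- `H_α(l) = ∑_{k=0}^{l} C(l,k)·C(−1−α,k)·2^k = ₂F₁(−l, 1+α; 1; 2)`, over `ℂ`. -/
noncomputable def Hc (α : ℝ) (l : ℕ) : ℂ :=
  ∑ k ∈ Finset.range (l + 1), gbinom (l : ℂ) k * gbinom (-1 - (α : ℂ)) k * 2 ^ k

/-- `H_α(l) = ∑_{k=0}^{l} C(l,k)·C(−1−α,k)·2^k = ₂F₁(−l, 1+α; 1; 2)`, over `ℝ`. -/
noncomputable def HR (α : ℝ) (l : ℕ) : ℝ :=
  ∑ k ∈ Finset.range (l + 1), gbinomR (l : ℝ) k * gbinomR (-1 - α) k * 2 ^ k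

/-- `arccot(x) = π/2 − arctan(x) ∈ (0,π)`. -/
noncomputable def arccot (x : ℝ) : ℝ := Real.pi / 2 - Real.arctan x

/-! With `a 0 = 0` and `a (k + 1) = C(-1-α, k) 2^k`, the polynomials
`P n x = ∑ j, C(n, j) a j x^(n-j)` form an Appell sequence, hence satisfy
`P n (x + y) = ∑ i, C(n, i) P i x y^(n-i)`. The left-hand sum is `P n (z + 1)` up to powers of
`z + 1`, where `z = ix`, and `P (l + 1) 1 = (l + 1) G_α(l)`, so the expansion is the addition
formula for `P n (1 + z)`, rewritten by `C(n, l + 1) (l + 1) = n C(n-1, l)`. -/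

section Appell

variable {R : Type*} [CommSemiring R]

/-- The value at `x` of the `n`-th Appell polynomial `∑ j, C(n, j) a j x^(n-j)` with constant
terms `a`, whose exponential generating function is `A(t) exp(xt)` with `A` that of `a`. It is
encoded as a function of `x` since only its values occur. -/
def appell (a : ℕ → R) (n : ℕ) (x : R) : R :=
  ∑ j ∈ range (n + 1), n.choose j * a j * x ^ (n - j)

theorem appell_add (a : ℕ → R) (n : ℕ) (x y : R) :
    appell a n (x + y) = ∑ i ∈ range (n + 1), n.choose i * appell a i x * y ^ (n - i) := by
  have choose_mul_choose {i j : ℕ} (hj : j ≤ i) :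
      (n.choose i * i.choose j : R) = n.choose j * (n - j).choose (i - j) := by
    rw_mod_cast [Nat.choose_mul hj]
  let f (j r : ℕ) : R := n.choose j * (n - j).choose r * a j * x ^ r * y ^ (n - j - r)
  calc
    appell a n (x + y) = ∑ j ∈ range (n + 1), ∑ r ∈ range (n + 1 - j), f j r := by
      refine sum_congr rfl fun j hj ↦ ?_
      rw [add_pow, mul_sum, Nat.sub_add_comm (mem_range_succ_iff.mp hj)]
      exact sum_congr rfl fun r _ ↦ by ring
    _ = ∑ i ∈ range (n + 1), ∑ j ∈ range (i + 1), f j (i - j) :=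
      (sum_range_diag_flip (n + 1) f).symm
    _ = ∑ i ∈ range (n + 1), n.choose i * appell a i x * y ^ (n - i) := by
      refine sum_congr rfl fun i _ ↦ ?_
      rw [appell, mul_sum, sum_mul]
      refine sum_congr rfl fun j hj ↦ ?_
      have hji : j ≤ i := mem_range_succ_iff.mp hj
      simp only [f, ← choose_mul_choose hji, Nat.sub_sub, Nat.add_sub_cancel' hji]
      ring

theorem appell_eq_sum_range {a : ℕ → R} (ha : a 0 = 0) (n : ℕ) (x : R) :
    appell a n x = ∑ k ∈ range n, n.choose (k + 1) * a (k + 1) * x ^ (n - (k + 1)) := by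
  simp [appell, sum_range_succ', ha]

end Appell

theorem gbinom_natCast (n k : ℕ) : gbinom n k = n.choose k := by
  rw [gbinom, Nat.cast_choose_eq_descPochhammer_div, descPochhammer_eval_eq_prod_range]

/-- The value `G_α(l) = ₂F₁(−l, 1+α; 2; 2)` at a complex parameter `α`, given by the same
terminating sum as `Gc`. -/
noncomputable def hypergeomG (α : ℂ) (l : ℕ) : ℂ :=
  (1 / ((l : ℂ) + 1)) * ∑ k ∈ range (l + 1),
    gbinom ((l : ℂ) + 1) (k + 1) * gbinom (-1 - α) k * 2 ^ k

theorem Gc_eq_hypergeomG (α : ℝ) : Gc α = hypergeomG α := rfl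

/-- The constant terms of the Appell sequence behind the expansion of the fractional Laplacian
of the Higgins functions. They are shifted by one index so that `C(n, k+1)` becomes the binomial
coefficient of an Appell polynomial. -/
noncomputable def higginsCoeff (α : ℂ) : ℕ → ℂ
  | 0 => 0
  | k + 1 => gbinom (-1 - α) k * 2 ^ k

theorem appell_higginsCoeff_one (α : ℂ) (l : ℕ) :
    appell (higginsCoeff α) (l + 1) 1 = (l + 1) * hypergeomG α l := by
  have hl : (l : ℂ) + 1 ≠ 0 := l.cast_add_one_ne_zero
  rw [hypergeomG, ← mul_assoc, mul_one_div_cancel hl, one_mul, appell_eq_sum_range rfl]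
  refine sum_congr rfl fun k _ ↦ ?_
  rw [← Nat.cast_succ, gbinom_natCast, higginsCoeff, one_pow, mul_one, mul_assoc]

theorem appell_higginsCoeff_add_one (α : ℂ) (n : ℕ) (z : ℂ) :
    appell (higginsCoeff α) n (z + 1) =
      n * ∑ l ∈ range n, gbinom ((n : ℂ) - 1) l * z ^ (n - 1 - l) * hypergeomG α l := by
  obtain _ | m := n
  · simp [appell, higginsCoeff]
  have choose_succ (l : ℕ) : ((m + 1).choose (l + 1) * (l + 1) : ℂ) = (m + 1) * m.choose l :=
    mod_cast (Nat.add_one_mul_choose_eq m l).symm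
  have appell_zero : appell (higginsCoeff α) 0 1 = 0 := by simp [appell, higginsCoeff]
  rw [add_comm z, appell_add, sum_range_succ', appell_zero, mul_zero, zero_mul, add_zero, mul_sum]
  refine sum_congr rfl fun l _ ↦ ?_
  rw [appell_higginsCoeff_one, Nat.cast_succ, add_sub_cancel_right, gbinom_natCast,
    Nat.add_sub_cancel, Nat.add_sub_add_right]
  linear_combination hypergeomG α l * z ^ (m - l) * choose_succ l

theorem mul_appell_higginsCoeff (α : ℂ) (n : ℕ) {w : ℂ} (hw : w ≠ 0) :
    w * appell (higginsCoeff α) n w =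
      w ^ n * ∑ k ∈ range n, gbinom n (k + 1) * gbinom (-1 - α) k * (2 / w) ^ k := by
  rw [appell_eq_sum_range rfl, mul_sum, mul_sum]
  refine sum_congr rfl fun k hk ↦ ?_
  have pow_split : w ^ n = w ^ (n - (k + 1)) * w ^ (k + 1) :=
    (pow_sub_mul_pow w (mem_range.mp hk)).symm
  rw [gbinom_natCast, higginsCoeff, pow_split, div_pow]
  field_simp
  ring

theorem fracLap_higgins_expansion_general (α : ℂ) (n : ℕ) {z : ℂ} (hz : z + 1 ≠ 0) :
    (∑ k ∈ range n, gbinom n (k + 1) * gbinom (-1 - α) k * (2 / (z + 1)) ^ k) /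
        (z + 1) ^ (1 + α) =
      n * (∑ l ∈ range n, gbinom ((n : ℂ) - 1) l * z ^ (n - 1 - l) * hypergeomG α l) /
        (z + 1) ^ (n + α) := by
  have hα : (z + 1) ^ α ≠ 0 := Complex.cpow_ne_zero_iff.mpr (.inl hz)
  rw [Complex.cpow_add _ _ hz, Complex.cpow_add _ _ hz, Complex.cpow_one, Complex.cpow_natCast,
    ← appell_higginsCoeff_add_one,
    div_eq_div_iff (mul_ne_zero hz hα) (mul_ne_zero (pow_ne_zero n hz) hα)]
  linear_combination -(z + 1) ^ α * mul_appell_higginsCoeff α n hz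

theorem fracLap_higgins_expansion (α : ℝ) (hα : α ∈ Set.Ioo (0 : ℝ) 2) (n : ℕ) (hn : 1 ≤ n)
    (x : ℝ) :
    -(2 * (Real.Gamma (1 + α) : ℂ) / (Complex.I * (x : ℂ) + 1) ^ ((1 : ℂ) + (α : ℂ))) *
        ∑ k ∈ Finset.range n,
          gbinom (n : ℂ) (k + 1) * gbinom (-1 - (α : ℂ)) k *
            (2 / (Complex.I * (x : ℂ) + 1)) ^ k =
      -(2 * (n : ℂ) * (Real.Gamma (1 + α) : ℂ) /
            (Complex.I * (x : ℂ) + 1) ^ ((n : ℂ) + (α : ℂ))) *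
        ∑ l ∈ Finset.range n,
          gbinom ((n : ℂ) - 1) l * (Complex.I * (x : ℂ)) ^ (n - 1 - l) * Gc α l := by
  have hz : Complex.I * (x : ℂ) + 1 ≠ 0 := fun h ↦ by simpa using congrArg Complex.re h
  rw [Gc_eq_hypergeomG]
  linear_combination -2 * (Real.Gamma (1 + α) : ℂ) * fracLap_higgins_expansion_general α n hz
end

section
/- Let α ∈ (0,2), n ∈ ℕ with n ≥ 1, and x ∈ ℝ. Define CH_{2n}(x) = Re λ_n(x) (the cosine-like Higgins function). Then y ↦ (CH_{2n}'(x−y) − CH_{2n}'(x+y))·y^(−α) is absolutely integrable on (0,∞), and (c_α/α)·∫₀^∞ (CH_{2n}'(x−y) − CH_{2n}'(x+y))·y^(−α) dy = −(2n·Γ(1+α)/(1+x²)^((n+α)/2))·sin((n+α)·arccot(x) − πα/2)·∑_{l≥0, 2l≤n−1} (−1)^l·C(n−1,2l)·x^(n−1−2l)·G_α(2l) + (2n·Γ(1+α)/(1+x²)^((n+α)/2))·cos((n+α)·arccot(x) − πα/2)·∑_{l≥0, 2l+1≤n−1} (−1)^l·C(n−1,2l+1)·x^(n−2−2l)·G_α(2l+1).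 -/
open MeasureTheory Finset

/-- The cosine-like Higgins function `CH_{2n}(x) = Re λ_n(x)`. -/
noncomputable def CH (n : ℕ) (x : ℝ) : ℝ := (higgins (n : ℤ) x).re

/-- The derivative `CH_{2n}'`. -/
noncomputable def CH' (n : ℕ) (x : ℝ) : ℝ := deriv (CH n) x

/-!
A Higgins function is a polynomial in `(1 + ix)⁻¹`, so it is enough to treat `(a + ix)⁻ᵐ` for
`0 < re a`. Translating in `x` only moves `a`, and the integral that remains is holomorphic in `a`.
For `m = 1` and real `a` it is computed by writing `1 / (a² + y²)` as a Laplace integral and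
exchanging the integrals; the identity theorem extends the result to the half-plane, and
differentiating in `a` raises `m`. With `z = 1 + ix` the outcome is
`(-Δ)^(α/2) z⁻ᵐ = Γ(m + α) / Γ(m) * z^(-m-α)`.

In the sum over `m`, expanding the remaining powers of `z` around `1` turns the coefficients into
the numbers `G_α(j)`, with weights `C(n-1, j) (ix)^(n-1-j)`. The powers of `i` then separate even
`j` from odd `j`, and `z^(-n-α)` in polar form supplies the sine and cosine.
-/

open Complex (I)
open scoped Topology

section BinomialSums

theorem gbinomR_natCast (n k : ℕ) : gbinomR n k = n.choose k := by
  rw [gbinomR, Nat.cast_choose_eq_descPochhammer_div, descPochhammer_eval_eq_prod_range]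

theorem gbinomR_succ (z : ℝ) (k : ℕ) : gbinomR z (k + 1) = gbinomR z k * ((z - k) / (k + 1)) := by
  rw [gbinomR, gbinomR, prod_range_succ, Nat.factorial_succ, Nat.cast_mul, Nat.cast_succ,
    div_mul_div_comm, mul_comm (k.factorial : ℝ)]

theorem Gamma_one_add_mul_gbinomR {α : ℝ} (hα : -1 < α) (k : ℕ) :
    Real.Gamma (1 + α) * gbinomR (-1 - α) k =
      (-1) ^ k * (Real.Gamma (k + 1 + α) / k.factorial) := by
  induction k with
  | zero => simp [gbinomR]
  | succ k ih =>
    have hk : (k : ℝ) + 1 + α ≠ 0 := by linarith [k.cast_nonneg (α := ℝ)]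
    have hΓ : Real.Gamma ((k + 1 : ℕ) + 1 + α) = (k + 1 + α) * Real.Gamma (k + 1 + α) := by
      rw [← Real.Gamma_add_one hk]
      congr 1
      push_cast
      ring
    rw [gbinomR_succ, ← mul_assoc, ih, hΓ, Nat.factorial_succ]
    push_cast
    field_simp
    ring

theorem sum_choose_mul_choose_mul_pow {R : Type*} [CommSemiring R] (n k : ℕ) (t : R) :
    ∑ j ∈ range (n + 1), (n.choose j : R) * j.choose k * t ^ (n - j) =
      n.choose k * (1 + t) ^ (n - k) := by
  have h_low : ∀ j < k, (n.choose j : R) * j.choose k * t ^ (n - j) = 0 := fun j hj => by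
    simp [Nat.choose_eq_zero_of_lt hj]
  rcases lt_or_ge n k with hnk | hkn
  · rw [Nat.choose_eq_zero_of_lt hnk, Nat.cast_zero, zero_mul]
    exact sum_eq_zero fun j hj => h_low j (by grind)
  obtain ⟨m, rfl⟩ := Nat.exists_eq_add_of_le hkn
  rw [add_assoc, sum_range_add, sum_eq_zero fun j hj => h_low j (mem_range.1 hj), zero_add,
    Nat.add_sub_cancel_left, add_pow, mul_sum]
  refine sum_congr rfl fun i _ => ?_
  have h_choose : (k + m).choose (k + i) * (k + i).choose k = (k + m).choose k * m.choose i := by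
    simpa using Nat.choose_mul (n := k + m) (Nat.le_add_right k i)
  rw [Nat.add_sub_add_left, one_pow, one_mul, mul_comm (t ^ _), ← mul_assoc]
  exact_mod_cast congrArg (fun a : ℕ => (a : R) * t ^ (m - i)) h_choose

theorem sum_choose_mul_pow_mul_sum_choose {R : Type*} [CommSemiring R] (n : ℕ) (t : R)
    (c : ℕ → R) :
    ∑ j ∈ range (n + 1), n.choose j * t ^ (n - j) * ∑ k ∈ range (j + 1), j.choose k * c k =
      ∑ k ∈ range (n + 1), n.choose k * c k * (1 + t) ^ (n - k) := by
  have h_extend : ∀ j ∈ range (n + 1), ∑ k ∈ range (j + 1), (j.choose k : R) * c k =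
      ∑ k ∈ range (n + 1), (j.choose k : R) * c k := fun j hj => by
    refine sum_subset (range_subset_range.2 (mem_range.1 hj)) fun k _ hk => ?_
    rw [Nat.choose_eq_zero_of_lt (by grind), Nat.cast_zero, zero_mul]
  calc _ = ∑ j ∈ range (n + 1), ∑ k ∈ range (n + 1),
        c k * ((n.choose j : R) * j.choose k * t ^ (n - j)) :=
        sum_congr rfl fun j hj => by
          rw [h_extend j hj, mul_sum]
          exact sum_congr rfl fun k _ => by ring
    _ = ∑ k ∈ range (n + 1), c k * (n.choose k * (1 + t) ^ (n - k)) := by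
        rw [sum_comm]
        simp only [← mul_sum, sum_choose_mul_choose_mul_pow]
    _ = _ := sum_congr rfl fun k _ => by ring

theorem add_one_mul_GR (α : ℝ) (j : ℕ) :
    (j + 1) * GR α j =
      ∑ k ∈ range (j + 1), (j + 1).choose (k + 1) * (gbinomR (-1 - α) k * 2 ^ k) := by
  have hj : (j : ℝ) + 1 ≠ 0 := j.cast_add_one_ne_zero
  rw [GR, one_div, mul_inv_cancel_left₀ hj]
  refine sum_congr rfl fun k _ => ?_
  rw [← gbinomR_natCast, Nat.cast_succ, mul_assoc]

theorem sum_choose_mul_pow_mul_GR (α : ℝ) (N : ℕ) (t : ℂ) :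
    (N + 1) * ∑ j ∈ range (N + 1), N.choose j * t ^ (N - j) * GR α j =
      ∑ k ∈ range (N + 1),
        (N + 1).choose (k + 1) * (gbinomR (-1 - α) k * 2 ^ k : ℝ) * (1 + t) ^ (N - k) := by
  -- The binomial transform of `c` at `j + 1` is `(j + 1) * GR α j`.
  let c : ℕ → ℂ
    | 0 => 0
    | k + 1 => (gbinomR (-1 - α) k * 2 ^ k : ℝ)
  have h_transform : ∀ j : ℕ,
      ∑ k ∈ range (j + 1 + 1), ((j + 1).choose k : ℂ) * c k = ((j + 1) * GR α j : ℝ) := fun j => by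
    rw [add_one_mul_GR, sum_range_succ']
    simp [c]
  have h := sum_choose_mul_pow_mul_sum_choose (N + 1) t c
  rw [sum_range_succ', sum_range_succ' _ (N + 1)] at h
  simp only [h_transform, Nat.add_sub_add_right, zero_add, range_one, sum_singleton] at h
  simp only [c, mul_zero, zero_mul, add_zero] at h
  rw [← h, mul_sum]
  refine sum_congr rfl fun j _ => ?_
  have h_absorb : ((N : ℂ) + 1) * N.choose j = (N + 1).choose (j + 1) * (j + 1) := by
    exact_mod_cast Nat.add_one_mul_choose_eq N j
  push_cast
  linear_combination t ^ (N - j) * GR α j * h_absorb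

end BinomialSums

section HalfPlane

/-- The function `y ↦ (a + iy)⁻ᵐ`; the Higgins functions are combinations of these with `a = 1`. -/
noncomputable def invPow (m : ℕ) (a : ℂ) (y : ℝ) : ℂ := ((a + I * y)⁻¹) ^ m

/-- The difference `(a - iy)⁻ᵐ - (a + iy)⁻ᵐ`. -/
noncomputable def invPowDiff (m : ℕ) (a : ℂ) (y : ℝ) : ℂ := invPow m a (-y) - invPow m a y

theorem add_I_mul_ne_zero {a : ℂ} (ha : 0 < a.re) (y : ℝ) : a + I * y ≠ 0 := fun h =>
  ha.ne' (by simpa using congrArg Complex.re h)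

theorem invPow_add (m : ℕ) (a : ℂ) (x y : ℝ) : invPow m a (x + y) = invPow m (a + I * x) y := by
  rw [invPow, invPow, Complex.ofReal_add, mul_add, add_assoc]

theorem norm_inv_add_I_mul_le {δ M : ℝ} (hδ : 0 < δ) {a : ℂ} (h_re : δ ≤ a.re) (h_norm : ‖a‖ ≤ M)
    (y : ℝ) : ‖(a + I * y)⁻¹‖ ≤ (1 + M + δ) / δ * (1 + |y|)⁻¹ := by
  have h_lower : δ ≤ ‖a + I * y‖ :=
    h_re.trans (by simpa using Complex.re_le_norm (a + I * y))
  have h_triangle : |y| - M ≤ ‖a + I * y‖ := by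
    have h := norm_sub_le (a + I * y) a
    rw [add_sub_cancel_left, norm_mul, Complex.norm_I, one_mul, Complex.norm_real,
      Real.norm_eq_abs] at h
    linarith
  have hM : 0 ≤ M := (norm_nonneg a).trans h_norm
  rw [norm_inv, ← div_eq_mul_inv, div_div, inv_eq_one_div,
    div_le_div_iff₀ (hδ.trans_le h_lower) (by positivity)]
  nlinarith

theorem norm_pow_sub_pow_le {R : Type*} [SeminormedCommRing R] [NormOneClass R] {p q : R} {C : ℝ}
    (hp : ‖p‖ ≤ C) (hq : ‖q‖ ≤ C) (m : ℕ) : ‖p ^ m - q ^ m‖ ≤ m * C ^ (m - 1) * ‖p - q‖ := by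
  have hC : 0 ≤ C := (norm_nonneg p).trans hp
  rw [← (Commute.all p q).geom_sum₂_mul]
  refine (norm_mul_le _ _).trans ?_
  gcongr
  calc ‖∑ i ∈ range m, p ^ i * q ^ (m - 1 - i)‖
    _ ≤ ∑ _i ∈ range m, C ^ (m - 1) := norm_sum_le_of_le _ fun i hi => by
        calc ‖p ^ i * q ^ (m - 1 - i)‖ ≤ ‖p‖ ^ i * ‖q‖ ^ (m - 1 - i) :=
              (norm_mul_le _ _).trans (by gcongr <;> exact norm_pow_le _ _)
          _ ≤ C ^ i * C ^ (m - 1 - i) := by gcongr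
          _ = C ^ (m - 1) := by rw [← pow_add]; congr 1; grind
    _ = m * C ^ (m - 1) := by simp

theorem invPowDiff_one {a : ℂ} (ha : 0 < a.re) (y : ℝ) :
    invPowDiff 1 a y = 2 * I * y * ((a + I * (-y : ℝ))⁻¹ * (a + I * y)⁻¹) := by
  have h_neg := add_I_mul_ne_zero ha (-y)
  have h_pos := add_I_mul_ne_zero ha y
  simp only [invPowDiff, invPow, pow_one]
  field_simp
  push_cast
  ring

theorem norm_invPowDiff_le (m : ℕ) {δ M : ℝ} (hδ : 0 < δ) {a : ℂ} (h_re : δ ≤ a.re)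
    (h_norm : ‖a‖ ≤ M) (y : ℝ) :
    ‖invPowDiff m a y‖ ≤ 2 * m * ((1 + M + δ) / δ) ^ (m + 1) * (|y| / (1 + |y|) ^ 2) := by
  set C : ℝ := (1 + M + δ) / δ
  have hM : 0 ≤ M := (norm_nonneg a).trans h_norm
  have hC : 0 < C := by positivity
  have h_decay (z : ℝ) : ‖(a + I * z)⁻¹‖ ≤ C * (1 + |z|)⁻¹ :=
    norm_inv_add_I_mul_le hδ h_re h_norm z
  have h_bdd (z : ℝ) : ‖(a + I * z)⁻¹‖ ≤ C :=
    (h_decay z).trans (mul_le_of_le_one_right hC.le (inv_le_one_of_one_le₀ (by simp)))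
  have h_first : ‖invPowDiff 1 a y‖ ≤ 2 * |y| * ((C * (1 + |y|)⁻¹) * (C * (1 + |y|)⁻¹)) := by
    rw [invPowDiff_one (hδ.trans_le h_re), norm_mul, norm_mul _ (y : ℂ), norm_mul _ (_⁻¹)]
    simp only [norm_mul, Complex.norm_I, Complex.norm_ofNat, mul_one, Complex.norm_real,
      Real.norm_eq_abs]
    gcongr
    · simpa using h_decay (-y)
    · exact h_decay y
  simp only [invPowDiff, invPow, pow_one] at h_first
  calc ‖invPowDiff m a y‖
    _ ≤ m * C ^ (m - 1) * (2 * |y| * ((C * (1 + |y|)⁻¹) * (C * (1 + |y|)⁻¹))) :=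
        (norm_pow_sub_pow_le (h_bdd (-y)) (h_bdd y) m).trans (by gcongr)
    _ = 2 * m * C ^ (m + 1) * (|y| / (1 + |y|) ^ 2) := by
        rcases m with _ | m
        · simp
        · rw [Nat.add_sub_cancel, div_eq_mul_inv, ← inv_pow]
          ring

theorem hasDerivAt_inv_pow {z : ℂ} (hz : z ≠ 0) (m : ℕ) :
    HasDerivAt (fun z : ℂ => z⁻¹ ^ m) (-m * z⁻¹ ^ (m + 1)) z := by
  refine ((hasDerivAt_inv hz).fun_pow m).congr_deriv ?_
  rcases m with _ | m
  · simp
  · rw [Nat.add_sub_cancel, ← inv_pow]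
    ring

theorem hasDerivAt_invPow (m : ℕ) {a : ℂ} (ha : 0 < a.re) (y : ℝ) :
    HasDerivAt (invPow m a) (-m * I * invPow (m + 1) a y) y := by
  have h_line : HasDerivAt (fun y : ℝ => a + I * (y : ℂ)) I y := by
    simpa using (Complex.ofRealCLM.hasDerivAt.const_mul I).const_add a
  refine ((hasDerivAt_inv_pow (add_I_mul_ne_zero ha y) m).scomp y h_line).congr_deriv ?_
  rw [smul_eq_mul, invPow]
  ring

theorem hasDerivAt_invPowDiff (m : ℕ) {a : ℂ} (ha : 0 < a.re) (y : ℝ) :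
    HasDerivAt (fun a => invPowDiff m a y) (-m * invPowDiff (m + 1) a y) a := by
  have h (z : ℝ) : HasDerivAt (fun a => invPow m a z) (-m * invPow (m + 1) a z) a :=
    (hasDerivAt_inv_pow (add_I_mul_ne_zero ha z) m).comp_add_const a (I * z)
  exact ((h (-y)).sub (h y)).congr_deriv (mul_sub _ _ _).symm

theorem measurable_invPowDiff (m : ℕ) (a : ℂ) : Measurable (invPowDiff m a) := by
  unfold invPowDiff invPow
  fun_prop

end HalfPlane

section MellinIntegral

variable {α : ℝ}

theorem integrableOn_rpow_neg_mul_div_one_add_sq (hα : α ∈ Set.Ioo (0 : ℝ) 2) :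
    IntegrableOn (fun y : ℝ => y ^ (-α) * (y / (1 + y) ^ 2)) (Set.Ioi 0) := by
  have h_meas : AEStronglyMeasurable (fun y : ℝ => y ^ (-α) * (y / (1 + y) ^ 2)) :=
    Measurable.aestronglyMeasurable (by fun_prop)
  rw [← Set.Ioc_union_Ioi_eq_Ioi zero_le_one, integrableOn_union]
  constructor
  · have h_rpow : IntegrableOn (fun y : ℝ => y ^ (-α + 1)) (Set.Ioc 0 1) := by
      rw [← intervalIntegrable_iff_integrableOn_Ioc_of_le zero_le_one]
      exact intervalIntegral.intervalIntegrable_rpow' (by linarith [hα.2])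
    refine h_rpow.mono' h_meas.restrict (ae_restrict_of_forall_mem measurableSet_Ioc fun y hy => ?_)
    have hy0 : 0 < y := hy.1
    rw [Real.norm_of_nonneg (by positivity), Real.rpow_add_one hy0.ne']
    gcongr
    exact div_le_self hy0.le (by nlinarith)
  · have h_rpow : IntegrableOn (fun y : ℝ => y ^ (-α - 1)) (Set.Ioi 1) :=
      integrableOn_Ioi_rpow_of_lt (by linarith [hα.1]) one_pos
    refine h_rpow.mono' h_meas.restrict (ae_restrict_of_forall_mem measurableSet_Ioi fun y hy => ?_)
    have hy0 : 0 < y := one_pos.trans hy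
    rw [Real.norm_of_nonneg (by positivity), Real.rpow_sub_one hy0.ne', div_eq_mul_inv (y ^ (-α))]
    gcongr
    rw [div_le_iff₀ (by positivity), inv_mul_eq_div, le_div_iff₀ hy0]
    nlinarith

theorem integrableOn_rpow_neg_smul_invPowDiff (hα : α ∈ Set.Ioo (0 : ℝ) 2) (m : ℕ) {a : ℂ}
    (ha : 0 < a.re) : IntegrableOn (fun y : ℝ => y ^ (-α) • invPowDiff m a y) (Set.Ioi 0) := by
  have h_meas : AEStronglyMeasurable (fun y : ℝ => y ^ (-α) • invPowDiff m a y) :=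
    Measurable.aestronglyMeasurable (by have := measurable_invPowDiff m a; fun_prop)
  let C : ℝ := 2 * m * ((1 + ‖a‖ + a.re) / a.re) ^ (m + 1)
  refine ((integrableOn_rpow_neg_mul_div_one_add_sq hα).const_mul C).mono' h_meas.restrict
    (ae_restrict_of_forall_mem measurableSet_Ioi fun y (hy : 0 < y) => ?_)
  rw [norm_smul, Real.norm_of_nonneg (by positivity), mul_left_comm]
  gcongr
  simpa only [abs_of_pos hy] using norm_invPowDiff_le m ha le_rfl le_rfl y

/-- The Mellin-type integral `∫₀^∞ ((a - iy)⁻ᵐ - (a + iy)⁻ᵐ) y^(-α) dy`, to which the fractional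
Laplacian of `invPow` reduces. -/
noncomputable def invPowDiffIntegral (α : ℝ) (m : ℕ) (a : ℂ) : ℂ :=
  ∫ y in Set.Ioi (0 : ℝ), y ^ (-α) • invPowDiff m a y

theorem hasDerivAt_invPowDiffIntegral (hα : α ∈ Set.Ioo (0 : ℝ) 2) (m : ℕ) {a : ℂ}
    (ha : 0 < a.re) :
    HasDerivAt (invPowDiffIntegral α m) (-m * invPowDiffIntegral α (m + 1) a) a := by
  let U : Set ℂ := {z | a.re / 2 < z.re} ∩ {z | ‖z‖ < ‖a‖ + 1}
  have hU : U ∈ 𝓝 a :=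
    ((isOpen_lt continuous_const Complex.continuous_re).inter
      (isOpen_lt continuous_norm continuous_const)).mem_nhds
        ⟨half_lt_self ha, lt_add_one ‖a‖⟩
  let C : ℝ := 2 * (m + 1 : ℕ) * ((1 + (‖a‖ + 1) + a.re / 2) / (a.re / 2)) ^ (m + 1 + 1)
  have h_bound : ∀ y ∈ Set.Ioi (0 : ℝ), ∀ z ∈ U, ‖y ^ (-α) • (-m * invPowDiff (m + 1) z y)‖ ≤
      m * C * (y ^ (-α) * (y / (1 + y) ^ 2)) := fun y (hy : 0 < y) z hz => by
    have h := norm_invPowDiff_le (m + 1) (half_pos ha) hz.1.le hz.2.le y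
    rw [abs_of_pos hy] at h
    rw [norm_smul, Real.norm_of_nonneg (by positivity), norm_mul, norm_neg, Complex.norm_natCast]
    calc _ ≤ y ^ (-α) * (m * (C * (y / (1 + y) ^ 2))) := by gcongr
      _ = _ := by ring
  have h_meas (k : ℕ) (z c : ℂ) : AEStronglyMeasurable
      (fun y : ℝ => y ^ (-α) • (c * invPowDiff k z y)) (volume.restrict (Set.Ioi 0)) :=
    Measurable.aestronglyMeasurable (by have := measurable_invPowDiff k z; fun_prop)
  have h := (hasDerivAt_integral_of_dominated_loc_of_deriv_le
    (F := fun z y => y ^ (-α) • invPowDiff m z y)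
    (F' := fun z y => y ^ (-α) • (-m * invPowDiff (m + 1) z y)) hU
    (.of_forall fun z => by simpa only [one_mul] using h_meas m z 1)
    (integrableOn_rpow_neg_smul_invPowDiff hα m ha) (h_meas (m + 1) a (-m))
    (ae_restrict_of_forall_mem measurableSet_Ioi h_bound)
    ((integrableOn_rpow_neg_mul_div_one_add_sq hα).const_mul _)
    (.of_forall fun y z hz =>
      (hasDerivAt_invPowDiff m ((half_pos ha).trans hz.1) y).fun_const_smul (y ^ (-α)))).2
  refine h.congr_deriv ?_
  simp only [invPowDiffIntegral, ← integral_const_mul, mul_smul_comm]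

theorem invPowDiff_one_ofReal {r : ℝ} (hr : 0 < r) (y : ℝ) :
    invPowDiff 1 r y = 2 * I * (y / (r ^ 2 + y ^ 2) : ℝ) := by
  have h_prod : (r + I * (-y : ℝ)) * (r + I * y) = ((r ^ 2 + y ^ 2 : ℝ) : ℂ) := by
    push_cast
    linear_combination (-y ^ 2 : ℂ) * Complex.I_sq
  rw [invPowDiff_one (by simpa using hr), ← mul_inv, h_prod, Complex.ofReal_div, div_eq_mul_inv,
    mul_assoc (2 * I)]

theorem integrableOn_rpow_neg_mul_div_sq_add_sq (hα : α ∈ Set.Ioo (0 : ℝ) 2) {r : ℝ}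
    (hr : 0 < r) : IntegrableOn (fun y : ℝ => y ^ (-α) * (y / (r ^ 2 + y ^ 2))) (Set.Ioi 0) := by
  refine ((integrableOn_rpow_neg_smul_invPowDiff hα 1 (a := r) (by simpa using hr)).im.const_mul
    (1 / 2)).congr (.of_forall fun y => ?_)
  simp [invPowDiff_one_ofReal hr, -Complex.ofReal_div]
  ring

theorem integral_rpow_mul_exp_neg_sq_add_sq_left (α : ℝ) {r y : ℝ} (hr : r ≠ 0) (hy : 0 < y) :
    ∫ t in Set.Ioi (0 : ℝ), y ^ (1 - α) * Real.exp (-(r ^ 2 + y ^ 2) * t) =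
      y ^ (-α) * (y / (r ^ 2 + y ^ 2)) := by
  have h_neg : -(r ^ 2 + y ^ 2) < 0 := neg_neg_of_pos (by positivity)
  rw [integral_const_mul, integral_exp_mul_Ioi h_neg, mul_zero, Real.exp_zero, neg_div_neg_eq,
    sub_eq_neg_add, Real.rpow_add_one hy.ne']
  ring

theorem integral_rpow_mul_exp_neg_sq_add_sq_right (hα : α < 2) (r : ℝ) {t : ℝ} (ht : 0 < t) :
    ∫ y in Set.Ioi (0 : ℝ), y ^ (1 - α) * Real.exp (-(r ^ 2 + y ^ 2) * t) =
      1 / 2 * Real.Gamma (1 - α / 2) * (t ^ (α / 2 - 1) * Real.exp (-(r ^ 2 * t))) := by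
  have h_split (y : ℝ) : y ^ (1 - α) * Real.exp (-(r ^ 2 + y ^ 2) * t) =
      Real.exp (-(r ^ 2 * t)) * (y ^ (1 - α) * Real.exp (-t * y ^ (2 : ℝ))) := by
    rw [Real.rpow_two, mul_left_comm, ← Real.exp_add]
    ring_nf
  simp only [h_split]
  rw [integral_const_mul, integral_rpow_mul_exp_neg_mul_rpow two_pos (by linarith) ht]
  ring_nf

theorem integrable_rpow_mul_exp_neg_sq_add_sq (hα : α ∈ Set.Ioo (0 : ℝ) 2) {r : ℝ} (hr : 0 < r) :
    Integrable (fun p : ℝ × ℝ => p.1 ^ (1 - α) * Real.exp (-(r ^ 2 + p.1 ^ 2) * p.2))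
      ((volume.restrict (Set.Ioi 0)).prod (volume.restrict (Set.Ioi 0))) := by
  refine (integrable_prod_iff (Measurable.aestronglyMeasurable (by fun_prop))).2
    ⟨ae_restrict_of_forall_mem measurableSet_Ioi fun y (hy : 0 < y) => ?_, ?_⟩
  · have h_neg : -(r ^ 2 + y ^ 2) < 0 := neg_neg_of_pos (by positivity)
    exact (integrableOn_exp_mul_Ioi h_neg 0).const_mul (y ^ (1 - α))
  · refine (integrableOn_rpow_neg_mul_div_sq_add_sq hα hr).congr
      (ae_restrict_of_forall_mem measurableSet_Ioi fun y (hy : 0 < y) => ?_)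
    have h_nonneg (t : ℝ) : 0 ≤ y ^ (1 - α) * Real.exp (-(r ^ 2 + y ^ 2) * t) := by positivity
    simp only [Real.norm_of_nonneg (h_nonneg _),
      integral_rpow_mul_exp_neg_sq_add_sq_left α hr.ne' hy]

theorem integral_rpow_neg_mul_div_sq_add_sq (hα : α ∈ Set.Ioo (0 : ℝ) 2) {r : ℝ} (hr : 0 < r) :
    ∫ y in Set.Ioi (0 : ℝ), y ^ (-α) * (y / (r ^ 2 + y ^ 2)) =
      1 / 2 * Real.Gamma (1 - α / 2) * Real.Gamma (α / 2) * r ^ (-α) := by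
  have h_rpow : (1 / r ^ 2) ^ (α / 2) = r ^ (-α) := by
    rw [one_div, ← Real.rpow_natCast, ← Real.rpow_neg hr.le, ← Real.rpow_mul hr.le]
    congr 1
    push_cast
    ring
  calc ∫ y in Set.Ioi (0 : ℝ), y ^ (-α) * (y / (r ^ 2 + y ^ 2))
    _ = ∫ y in Set.Ioi (0 : ℝ), ∫ t in Set.Ioi (0 : ℝ),
          y ^ (1 - α) * Real.exp (-(r ^ 2 + y ^ 2) * t) :=
        setIntegral_congr_fun measurableSet_Ioi fun y hy =>
          (integral_rpow_mul_exp_neg_sq_add_sq_left α hr.ne' hy).symm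
    _ = ∫ t in Set.Ioi (0 : ℝ), ∫ y in Set.Ioi (0 : ℝ),
          y ^ (1 - α) * Real.exp (-(r ^ 2 + y ^ 2) * t) :=
        integral_integral_swap (integrable_rpow_mul_exp_neg_sq_add_sq hα hr)
    _ = ∫ t in Set.Ioi (0 : ℝ),
          1 / 2 * Real.Gamma (1 - α / 2) * (t ^ (α / 2 - 1) * Real.exp (-(r ^ 2 * t))) :=
        setIntegral_congr_fun measurableSet_Ioi fun t ht =>
          integral_rpow_mul_exp_neg_sq_add_sq_right hα.2 r ht
    _ = 1 / 2 * Real.Gamma (1 - α / 2) * Real.Gamma (α / 2) * r ^ (-α) := by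
        rw [integral_const_mul, Real.integral_rpow_mul_exp_neg_mul_Ioi (half_pos hα.1)
          (by positivity), h_rpow]
        ring

theorem invPowDiffIntegral_one_ofReal (hα : α ∈ Set.Ioo (0 : ℝ) 2) {r : ℝ} (hr : 0 < r) :
    invPowDiffIntegral α 1 r =
      I * (Real.Gamma (1 - α / 2) * Real.Gamma (α / 2) : ℝ) * (r : ℂ) ^ (-α : ℂ) := by
  have h_integrand (y : ℝ) : y ^ (-α) • invPowDiff 1 r y =
      2 * I * (y ^ (-α) * (y / (r ^ 2 + y ^ 2)) : ℝ) := by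
    rw [invPowDiff_one_ofReal hr, Complex.real_smul, Complex.ofReal_mul, mul_left_comm]
  simp only [invPowDiffIntegral, h_integrand]
  rw [integral_const_mul, integral_complex_ofReal, integral_rpow_neg_mul_div_sq_add_sq hα hr,
    ← Complex.ofReal_neg, ← Complex.ofReal_cpow hr.le]
  push_cast
  ring

theorem eq_of_eq_ofReal_of_re_pos {f g : ℂ → ℂ} (hf : DifferentiableOn ℂ f {z | 0 < z.re})
    (hg : DifferentiableOn ℂ g {z | 0 < z.re}) (hfg : ∀ r : ℝ, 0 < r → f r = g r) {z : ℂ}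
    (hz : 0 < z.re) : f z = g z := by
  have h_open : IsOpen {z : ℂ | 0 < z.re} := isOpen_lt continuous_const Complex.continuous_re
  have h_tendsto : Filter.Tendsto ((↑) : ℝ → ℂ) (𝓝[≠] 1) (𝓝[≠] 1) := by
    simpa using (hasDerivAt_id (1 : ℝ)).ofReal_comp.tendsto_nhdsNE (by simp)
  refine (hf.analyticOnNhd h_open).eqOn_of_preconnected_of_frequently_eq (hg.analyticOnNhd h_open)
    (convex_halfSpace_re_gt 0).isPreconnected (z₀ := 1) (by simp) ?_ hz
  refine h_tendsto.frequently (Filter.Eventually.frequently ?_)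
  filter_upwards [mem_nhdsWithin_of_mem_nhds (Ioi_mem_nhds one_pos)] with r hr using hfg r hr

theorem invPowDiffIntegral_one (hα : α ∈ Set.Ioo (0 : ℝ) 2) {a : ℂ} (ha : 0 < a.re) :
    invPowDiffIntegral α 1 a =
      I * (Real.Gamma (1 - α / 2) * Real.Gamma (α / 2) : ℝ) * a ^ (-α : ℂ) := by
  refine eq_of_eq_ofReal_of_re_pos (f := invPowDiffIntegral α 1)
    (g := fun z => I * (Real.Gamma (1 - α / 2) * Real.Gamma (α / 2) : ℝ) * z ^ (-α : ℂ))
    (fun z hz => ?_) (fun z hz => ?_) (fun r hr => invPowDiffIntegral_one_ofReal hα hr) ha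
  · exact (hasDerivAt_invPowDiffIntegral hα 1 hz).differentiableAt.differentiableWithinAt
  · exact ((differentiableAt_id.cpow_const (.inl hz)).const_mul _).differentiableWithinAt

theorem cFrac_div_mul_Gamma_mul_Gamma (hα : α ∈ Set.Ioo (0 : ℝ) 2) :
    cFrac α / α * (Real.Gamma (1 - α / 2) * Real.Gamma (α / 2)) = Real.Gamma α := by
  have hα0 : α ≠ 0 := hα.1.ne'
  have hΓ : Real.Gamma (1 - α / 2) ≠ 0 := (Real.Gamma_pos_of_pos (by linarith [hα.2])).ne'
  have hπ : √Real.pi ≠ 0 := (Real.sqrt_pos.2 Real.pi_pos).ne'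
  have h_dup : Real.Gamma (α / 2) * Real.Gamma (1 / 2 + α / 2) =
      Real.Gamma α * 2 ^ (1 - α) * √Real.pi := by
    rw [add_comm (1 / 2), Real.Gamma_mul_Gamma_add_half, mul_div_cancel₀ α two_ne_zero]
  have h_two : (2 : ℝ) ^ (α - 1) * 2 ^ (1 - α) = 1 := by
    rw [← Real.rpow_add two_pos, sub_add_sub_cancel, sub_self, Real.rpow_zero]
  calc _ = 2 ^ (α - 1) * (Real.Gamma (α / 2) * Real.Gamma (1 / 2 + α / 2)) / √Real.pi := by
        rw [cFrac]
        generalize Real.Gamma (1 - α / 2) = Γ at hΓ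
        field_simp
    _ = 2 ^ (α - 1) * 2 ^ (1 - α) * Real.Gamma α := by
        rw [h_dup]
        field_simp
    _ = Real.Gamma α := by rw [h_two, one_mul]

theorem cFrac_div_mul_invPowDiffIntegral (hα : α ∈ Set.Ioo (0 : ℝ) 2) (m : ℕ) {a : ℂ}
    (ha : 0 < a.re) :
    (cFrac α / α : ℝ) * invPowDiffIntegral α (m + 1) a =
      I * (Real.Gamma (m + α) / m.factorial : ℝ) * a ^ (-m - α : ℂ) := by
  induction m generalizing a with
  | zero =>
    rw [invPowDiffIntegral_one hα ha, ← mul_assoc, mul_left_comm, ← Complex.ofReal_mul,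
      cFrac_div_mul_Gamma_mul_Gamma hα]
    simp
  | succ m ih =>
    have h_left := (hasDerivAt_invPowDiffIntegral hα (m + 1) ha).const_mul ((cFrac α / α : ℝ) : ℂ)
    have h_right : HasDerivAt
        (fun z : ℂ => I * (Real.Gamma (m + α) / m.factorial : ℝ) * z ^ (-m - α : ℂ))
        (I * (Real.Gamma (m + α) / m.factorial : ℝ) * ((-m - α) * a ^ (-m - α - 1 : ℂ) * 1)) a :=
      ((hasDerivAt_id a).cpow_const (.inl ha)).const_mul _
    have h_deriv := h_left.unique (h_right.congr_of_eventuallyEq (Filter.eventually_of_mem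
      ((isOpen_lt continuous_const Complex.continuous_re).mem_nhds ha) fun z hz => ih hz))
    have hΓ : Real.Gamma ((m + 1 : ℕ) + α) = (m + α) * Real.Gamma (m + α) := by
      have hm : (m : ℝ) + α ≠ 0 := by linarith [hα.1, m.cast_nonneg (α := ℝ)]
      rw [← Real.Gamma_add_one hm, Nat.cast_succ, add_right_comm]
    have hm : (m : ℂ) + 1 ≠ 0 := m.cast_add_one_ne_zero
    have h_exp : (-(m + 1 : ℕ) - α : ℂ) = -m - α - 1 := by push_cast; ring
    apply mul_left_cancel₀ (neg_ne_zero.2 hm)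
    rw [h_exp, hΓ, Nat.factorial_succ, mul_left_comm, ← Nat.cast_succ m, h_deriv]
    push_cast
    field_simp
    ring

end MellinIntegral

section FractionalLaplacian

variable {α : ℝ} {E : Type*} [NormedAddCommGroup E] [NormedSpace ℝ E]

/-- `HasFracLap α u x v` says that `u` is differentiable and that the integral defining
`(-Δ)^(α/2) u x` converges absolutely, with value `v`. -/
structure HasFracLap (α : ℝ) (u : ℝ → E) (x : ℝ) (v : E) : Prop where
  differentiable : Differentiable ℝ u
  integrableOn :
    IntegrableOn (fun y => y ^ (-α) • (deriv u (x - y) - deriv u (x + y))) (Set.Ioi 0)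
  smul_integral_eq :
    (cFrac α / α) • ∫ y in Set.Ioi (0 : ℝ), y ^ (-α) • (deriv u (x - y) - deriv u (x + y)) = v

theorem HasFracLap.clm_comp {F : Type*} [NormedAddCommGroup F] [NormedSpace ℝ F]
    [CompleteSpace E] [CompleteSpace F] (L : E →L[ℝ] F) {u : ℝ → E} {x : ℝ} {v : E}
    (h : HasFracLap α u x v) : HasFracLap α (fun y => L (u y)) x (L v) := by
  have h_deriv (y : ℝ) : deriv (fun y => L (u y)) y = L (deriv u y) :=
    (L.hasFDerivAt.comp_hasDerivAt y (h.differentiable y).hasDerivAt).deriv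
  refine ⟨L.differentiable.comp h.differentiable, ?_, ?_⟩ <;>
    simp only [h_deriv, ← map_sub, ← map_smul]
  · exact L.integrable_comp h.integrableOn
  · rw [L.integral_comp_comm h.integrableOn, ← map_smul, h.smul_integral_eq]

theorem HasFracLap.const_mul {u : ℝ → ℂ} {x : ℝ} {v : ℂ} (c : ℂ) (h : HasFracLap α u x v) :
    HasFracLap α (fun y => c * u y) x (c * v) :=
  h.clm_comp (ContinuousLinearMap.mul ℝ ℂ c)

theorem HasFracLap.fun_sum {ι : Type*} {s : Finset ι} {u : ι → ℝ → E} {x : ℝ} {v : ι → E}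
    (h : ∀ i ∈ s, HasFracLap α (u i) x (v i)) :
    HasFracLap α (fun y => ∑ i ∈ s, u i y) x (∑ i ∈ s, v i) := by
  have h_deriv (y : ℝ) : deriv (fun y => ∑ i ∈ s, u i y) y = ∑ i ∈ s, deriv (u i) y :=
    deriv_fun_sum fun i hi => (h i hi).differentiable y
  refine ⟨.fun_sum fun i hi => (h i hi).differentiable, ?_, ?_⟩ <;>
    simp only [h_deriv, ← sum_sub_distrib, smul_sum]
  · exact integrable_finsetSum s fun i hi => (h i hi).integrableOn
  · rw [integral_finsetSum s fun i hi => (h i hi).integrableOn, smul_sum]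
    exact sum_congr rfl fun i hi => (h i hi).smul_integral_eq

theorem HasFracLap.add_const {u : ℝ → E} {x : ℝ} {v : E} (h : HasFracLap α u x v) (c : E) :
    HasFracLap α (fun y => u y + c) x v where
  differentiable := h.differentiable.add_const c
  integrableOn := by simpa only [deriv_add_const] using h.integrableOn
  smul_integral_eq := by simpa only [deriv_add_const] using h.smul_integral_eq

theorem hasFracLap_invPow (hα : α ∈ Set.Ioo (0 : ℝ) 2) (m : ℕ) {a : ℂ} (ha : 0 < a.re) (x : ℝ) :
    HasFracLap α (invPow (m + 1) a) x
      ((Real.Gamma (m + 1 + α) / m.factorial : ℝ) * (a + I * x) ^ (-(m + 1) - α : ℂ)) := by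
  have ha' : 0 < (a + I * x).re := by simpa using ha
  have h_deriv (y : ℝ) := hasDerivAt_invPow (m + 1) ha y
  have h_diff (y : ℝ) : y ^ (-α) •
      (deriv (invPow (m + 1) a) (x - y) - deriv (invPow (m + 1) a) (x + y)) =
      -(m + 1 : ℕ) * I * y ^ (-α) • invPowDiff (m + 2) (a + I * x) y := by
    rw [(h_deriv _).deriv, (h_deriv _).deriv, sub_eq_add_neg x y, invPow_add, invPow_add,
      ← mul_sub, mul_smul_comm, invPowDiff]
  refine ⟨fun y => (h_deriv y).differentiableAt, ?_, ?_⟩ <;> simp only [h_diff]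
  · exact (integrableOn_rpow_neg_smul_invPowDiff hα (m + 2) ha').const_mul _
  · have hm : (m : ℂ) + 1 ≠ 0 := m.cast_add_one_ne_zero
    have h_integral := cFrac_div_mul_invPowDiffIntegral hα (m + 1) ha'
    rw [integral_const_mul, Complex.real_smul, mul_left_comm, ← invPowDiffIntegral, h_integral,
      Nat.factorial_succ]
    push_cast
    field_simp
    rw [Complex.I_sq]
    ring

end FractionalLaplacian

section Higgins

variable {α : ℝ}

theorem higgins_natCast_eq_sum (n : ℕ) (x : ℝ) :
    higgins n x = ∑ k ∈ range n, (n.choose (k + 1) * (-2) ^ (k + 1)) * invPow (k + 1) 1 x + 1 := by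
  have hx : 1 + I * (x : ℂ) ≠ 0 := add_I_mul_ne_zero (by simp) x
  have h_base : (I * x - 1) / (I * x + 1) = -2 * (1 + I * (x : ℂ))⁻¹ + 1 := by
    rw [add_comm _ 1]
    field_simp
    ring
  rw [higgins, zpow_natCast, h_base, add_pow, sum_range_succ']
  simp only [invPow, one_pow, mul_one, mul_pow, pow_zero, Nat.choose_zero_right, Nat.cast_one]
  congr 1
  exact sum_congr rfl fun k _ => by ring

theorem hasFracLap_higgins (hα : α ∈ Set.Ioo (0 : ℝ) 2) (N : ℕ) (x : ℝ) :
    HasFracLap α (higgins (N + 1 : ℕ)) x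
      (-2 * (N + 1) * Real.Gamma (1 + α) * (1 + I * x) ^ (-(N + 1 : ℕ) - α : ℂ) *
        ∑ j ∈ range (N + 1), N.choose j * (I * x) ^ (N - j) * GR α j) := by
  have hx : 1 + I * (x : ℂ) ≠ 0 := add_I_mul_ne_zero (by simp) x
  have h := (HasFracLap.fun_sum (s := range (N + 1)) fun k _ =>
    (hasFracLap_invPow hα k (a := 1) (by simp) x).const_mul
      ((N + 1).choose (k + 1) * (-2) ^ (k + 1))).add_const 1
  rw [funext (higgins_natCast_eq_sum (N + 1))]
  convert h using 1
  calc _ = -2 * Real.Gamma (1 + α) * (1 + I * x) ^ (-(N + 1 : ℕ) - α : ℂ) *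
        ((N + 1) * ∑ j ∈ range (N + 1), N.choose j * (I * x) ^ (N - j) * GR α j) := by ring
    _ = _ := by
      rw [sum_choose_mul_pow_mul_GR, mul_sum]
      refine sum_congr rfl fun k hk => ?_
      have h_cpow : (1 + I * x) ^ (-(N + 1 : ℕ) - α : ℂ) * (1 + I * x) ^ (N - k) =
          (1 + I * x) ^ (-(k + 1) - α : ℂ) := by
        rw [← Complex.cpow_natCast, ← Complex.cpow_add _ _ hx, Nat.cast_sub (by grind)]
        congr 1
        push_cast
        ring
      have h_Gamma : Real.Gamma (1 + α) * (gbinomR (-1 - α) k * 2 ^ k) =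
          (-2) ^ k * (Real.Gamma (k + 1 + α) / k.factorial) := by
        rw [← mul_assoc, Gamma_one_add_mul_gbinomR (by linarith [hα.1]), neg_pow 2 k]
        ring
      have h_Gamma' := congrArg ((↑) : ℝ → ℂ) h_Gamma
      rw [← h_cpow]
      push_cast at h_Gamma' ⊢
      linear_combination -2 * (N + 1).choose (k + 1) * (1 + I * x) ^ (-(N + 1) - α : ℂ) *
        (1 + I * x) ^ (N - k) * h_Gamma'

theorem log_one_add_I_mul (x : ℝ) :
    Complex.log (1 + I * x) = (Real.log (1 + x ^ 2) / 2 : ℝ) + I * Real.arctan x := by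
  have hx : 0 < 1 + x ^ 2 := by positivity
  have h_sqrt : 0 < √(1 + x ^ 2) := Real.sqrt_pos.2 hx
  have h_polar : 1 + I * x = (√(1 + x ^ 2) : ℂ) * Complex.exp (Real.arctan x * I) := by
    have h_sqrt' : (√(1 + x ^ 2) : ℂ) ≠ 0 := Complex.ofReal_ne_zero.2 h_sqrt.ne'
    rw [Complex.exp_mul_I, ← Complex.ofReal_cos, ← Complex.ofReal_sin, Real.cos_arctan,
      Real.sin_arctan]
    push_cast
    field_simp
  rw [h_polar, Complex.log_ofReal_mul h_sqrt (Complex.exp_ne_zero _), Real.log_sqrt hx.le,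
    Complex.log_exp, mul_comm I]
  all_goals
    rw [Complex.im_ofReal_mul, Complex.I_im, mul_one]
    linarith [Real.neg_pi_div_two_lt_arctan x, Real.arctan_lt_pi_div_two x, Real.pi_pos]

theorem one_add_I_mul_cpow (α : ℝ) (n : ℕ) (x : ℝ) :
    (1 + I * x) ^ (-n - α : ℂ) = (((1 + x ^ 2) ^ ((n + α) / 2))⁻¹ : ℝ) * (-I) ^ n *
      Complex.exp (((n + α) * arccot x - Real.pi * α / 2 : ℝ) * I) := by
  have hx : 0 < 1 + x ^ 2 := by positivity
  have h_neg_I : -I = Complex.exp (-(Real.pi / 2 * I)) := by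
    rw [Complex.exp_neg, Complex.exp_pi_div_two_mul_I, Complex.inv_I]
  rw [Complex.cpow_def_of_ne_zero (add_I_mul_ne_zero (by simp) x), log_one_add_I_mul,
    Real.rpow_def_of_pos hx, ← Real.exp_neg, Complex.ofReal_exp, h_neg_I, ← Complex.exp_nat_mul,
    ← Complex.exp_add, ← Complex.exp_add, arccot]
  congr 1
  push_cast
  ring

theorem sum_range_succ_eq_sum_even_add_sum_odd {M : Type*} [AddCommMonoid M] (N : ℕ) (f : ℕ → M) :
    ∑ j ∈ range (N + 1), f j = ∑ l ∈ range (N + 1) with 2 * l ≤ N, f (2 * l) +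
      ∑ l ∈ range (N + 1) with 2 * l + 1 ≤ N, f (2 * l + 1) := by
  rw [← sum_filter_add_sum_filter_not (range (N + 1)) Even]
  congr 1
  · exact sum_nbij' (· / 2) (2 * ·) (by grind) (by grind) (by grind) (by grind) (by grind)
  · exact sum_nbij' (· / 2) (2 * · + 1) (by grind) (by grind) (by grind) (by grind) (by grind)

theorem sum_neg_I_pow_mul_ofReal (N : ℕ) (c : ℕ → ℝ) :
    ∑ j ∈ range (N + 1), (-I) ^ j * c j =
      (∑ l ∈ range (N + 1) with 2 * l ≤ N, (-1) ^ l * c (2 * l) : ℝ) -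
        I * (∑ l ∈ range (N + 1) with 2 * l + 1 ≤ N, (-1) ^ l * c (2 * l + 1) : ℝ) := by
  have h_even (l : ℕ) : (-I) ^ (2 * l) = (-1) ^ l := by rw [pow_mul, neg_sq, Complex.I_sq]
  have h_odd (l : ℕ) : (-I) ^ (2 * l + 1) = -I * (-1) ^ l := by rw [pow_succ', h_even]
  rw [sum_range_succ_eq_sum_even_add_sum_odd, sub_eq_add_neg, ← neg_mul]
  push_cast
  simp only [h_even, h_odd, mul_sum, mul_assoc]

theorem neg_I_pow_mul_sum_mul_I_mul_pow (N : ℕ) (x : ℝ) (c : ℕ → ℂ) :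
    (-I) ^ N * ∑ j ∈ range (N + 1), (I * x) ^ (N - j) * c j =
      ∑ j ∈ range (N + 1), (-I) ^ j * (x ^ (N - j) * c j) := by
  rw [mul_sum]
  refine sum_congr rfl fun j hj => ?_
  obtain ⟨m, rfl⟩ := Nat.exists_eq_add_of_le (Nat.lt_succ_iff.1 (mem_range.1 hj))
  have h_one : (-I) ^ m * I ^ m = 1 := by
    rw [← mul_pow, neg_mul, Complex.I_mul_I, neg_neg, one_pow]
  rw [Nat.add_sub_cancel_left, mul_pow, pow_add]
  linear_combination (-I) ^ j * x ^ m * c j * h_one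

theorem hasFracLap_higgins_polar (hα : α ∈ Set.Ioo (0 : ℝ) 2) (N : ℕ) (x : ℝ) :
    HasFracLap α (higgins (N + 1 : ℕ)) x
      ((2 * (N + 1) * Real.Gamma (1 + α) * ((1 + x ^ 2) ^ (((N + 1 : ℕ) + α) / 2))⁻¹ : ℝ) *
        (Complex.exp ((((N + 1 : ℕ) + α) * arccot x - Real.pi * α / 2 : ℝ) * I) *
          (I * ∑ j ∈ range (N + 1), (-I) ^ j * (N.choose j * x ^ (N - j) * GR α j : ℝ)))) := by
  convert hasFracLap_higgins hα N x using 1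
  have h_sum : ∑ j ∈ range (N + 1), (-I) ^ j * (N.choose j * x ^ (N - j) * GR α j : ℝ) =
      (-I) ^ N * ∑ j ∈ range (N + 1), N.choose j * (I * x) ^ (N - j) * GR α j := by
    have h := neg_I_pow_mul_sum_mul_I_mul_pow N x fun j => N.choose j * GR α j
    simpa [mul_left_comm, mul_assoc] using h.symm
  rw [one_add_I_mul_cpow, h_sum, pow_succ]
  push_cast
  ring

theorem re_exp_mul_I_mul_I_mul_sub (φ a b : ℝ) :
    (Complex.exp (φ * I) * (I * (a - I * b))).re = Real.cos φ * b - Real.sin φ * a := by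
  simp [Complex.exp_ofReal_mul_I_re, Complex.exp_ofReal_mul_I_im]

theorem hasFracLap_CH (hα : α ∈ Set.Ioo (0 : ℝ) 2) (N : ℕ) (x : ℝ) :
    HasFracLap α (CH (N + 1)) x
      (2 * (N + 1) * Real.Gamma (1 + α) * ((1 + x ^ 2) ^ (((N + 1 : ℕ) + α) / 2))⁻¹ *
        (Real.cos (((N + 1 : ℕ) + α) * arccot x - Real.pi * α / 2) *
            ∑ l ∈ range (N + 1) with 2 * l + 1 ≤ N,
              (-1) ^ l * (N.choose (2 * l + 1) * x ^ (N - (2 * l + 1)) * GR α (2 * l + 1)) -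
          Real.sin (((N + 1 : ℕ) + α) * arccot x - Real.pi * α / 2) *
            ∑ l ∈ range (N + 1) with 2 * l ≤ N,
              (-1) ^ l * (N.choose (2 * l) * x ^ (N - 2 * l) * GR α (2 * l)))) := by
  have h := (hasFracLap_higgins_polar hα N x).clm_comp Complex.reCLM
  rwa [sum_neg_I_pow_mul_ofReal N fun j => N.choose j * x ^ (N - j) * GR α j,
    Complex.reCLM_apply, Complex.re_ofReal_mul, re_exp_mul_I_mul_I_mul_sub] at h

end Higgins

theorem fracLap_CH (α : ℝ) (hα : α ∈ Set.Ioo (0 : ℝ) 2) (n : ℕ) (hn : 1 ≤ n) (x : ℝ) :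
    IntegrableOn (fun y : ℝ => (CH' n (x - y) - CH' n (x + y)) * y ^ (-α)) (Set.Ioi 0) ∧
    (cFrac α / α) * ∫ y in Set.Ioi (0 : ℝ), (CH' n (x - y) - CH' n (x + y)) * y ^ (-α) =
      -(2 * (n : ℝ) * Real.Gamma (1 + α) / (1 + x ^ 2) ^ (((n : ℝ) + α) / 2)) *
          Real.sin (((n : ℝ) + α) * arccot x - Real.pi * α / 2) *
          ∑ l ∈ (Finset.range n).filter (fun l => 2 * l ≤ n - 1),
            (-1 : ℝ) ^ l * gbinomR ((n : ℝ) - 1) (2 * l) * x ^ (n - 1 - 2 * l) * GR α (2 * l)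
        + (2 * (n : ℝ) * Real.Gamma (1 + α) / (1 + x ^ 2) ^ (((n : ℝ) + α) / 2)) *
          Real.cos (((n : ℝ) + α) * arccot x - Real.pi * α / 2) *
          ∑ l ∈ (Finset.range n).filter (fun l => 2 * l + 1 ≤ n - 1),
            (-1 : ℝ) ^ l * gbinomR ((n : ℝ) - 1) (2 * l + 1) * x ^ (n - 2 - 2 * l) *
              GR α (2 * l + 1) := by
  obtain ⟨N, rfl⟩ := Nat.exists_eq_add_of_le' hn
  have h := hasFracLap_CH hα N x
  have h_pow_odd (l : ℕ) : N + 1 - 2 - 2 * l = N - (2 * l + 1) := by grind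
  have h_cast : ((N + 1 : ℕ) : ℝ) - 1 = N := by simp
  simp only [h_pow_odd, h_cast, Nat.add_sub_cancel, gbinomR_natCast, mul_comm _ (_ ^ (-α))]
  refine ⟨h.integrableOn, h.smul_integral_eq.trans ?_⟩
  simp only [mul_assoc]
  push_cast
  ring
end
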